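/- arXiv:math/0702077 — 4 statements merged into one kernel-verified Lean document; each statement's English description precedes it below -/
import Mathlib

section
/- For all u, X ∈ ℝ⁷ and every k: (1/6) Σ_{a,b} (u_φ X_φ − X_φ u_φ)_{ab} φ_{kab} = (u × X)_k. In other words, the Ω²₇-component of the matrix commutator [u_φ, X_φ], regarded as a vector via Y ↦ Y_φ, equals the cross product u × X. -/
open Finset

noncomputable section

def phi0 : Fin 7 → Fin 7 → Fin 7 → ℝ := fun i j k =>
  if (i, j, k) = (0, 1, 2) then -1
  else if (i, j, k) = (0, 3, 4) then -1
  else if (i, j, k) = (0, 5, 6) then -1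
  else if (i, j, k) = (1, 3, 5) then -1
  else if (i, j, k) = (1, 4, 6) then 1
  else if (i, j, k) = (2, 3, 6) then 1
  else if (i, j, k) = (2, 4, 5) then 1
  else 0

/-- The standard G₂ 3-form on ℝ⁷ (paper's orientation convention), as a totally
antisymmetric array with `φ₁₂₃ = φ₁₄₅ = φ₁₆₇ = φ₂₄₆ = −1`, `φ₂₅₇ = φ₃₄₇ = φ₃₅₆ = 1`
(indices shifted to start at 0). -/
def phi (i j k : Fin 7) : ℝ :=
  ∑ σ : Equiv.Perm (Fin 3),
    ((Equiv.Perm.sign σ : ℤ) : ℝ) *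
      phi0 (![i, j, k] (σ 0)) (![i, j, k] (σ 1)) (![i, j, k] (σ 2))

def psi0 : Fin 7 → Fin 7 → Fin 7 → Fin 7 → ℝ := fun i j k l =>
  if (i, j, k, l) = (0, 1, 3, 6) then 1
  else if (i, j, k, l) = (0, 1, 4, 5) then 1
  else if (i, j, k, l) = (0, 2, 3, 5) then 1
  else if (i, j, k, l) = (0, 2, 4, 6) then -1
  else if (i, j, k, l) = (1, 2, 3, 4) then -1
  else if (i, j, k, l) = (1, 2, 5, 6) then -1
  else if (i, j, k, l) = (3, 4, 5, 6) then -1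
  else 0

/-- The dual 4-form ψ = ∗φ of the standard G₂-structure, as a totally antisymmetric
array with `ψ₁₂₄₇ = ψ₁₂₅₆ = ψ₁₃₄₆ = 1`, `ψ₁₃₅₇ = ψ₂₃₄₅ = ψ₂₃₆₇ = ψ₄₅₆₇ = −1`
(indices shifted to start at 0). -/
def psi (i j k l : Fin 7) : ℝ :=
  ∑ σ : Equiv.Perm (Fin 4),
    ((Equiv.Perm.sign σ : ℤ) : ℝ) *
      psi0 (![i, j, k, l] (σ 0)) (![i, j, k, l] (σ 1)) (![i, j, k, l] (σ 2))
        (![i, j, k, l] (σ 3))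

/-- Kronecker delta. -/
def kdelta (i j : Fin 7) : ℝ := if i = j then 1 else 0

/-- The G₂ cross product on ℝ⁷: `(u × v)_k = Σ_{i,j} φ_{ijk} u_i v_j`. -/
def cross (u v : Fin 7 → ℝ) : Fin 7 → ℝ := fun k =>
  ∑ i, ∑ j, phi i j k * u i * v j

/-- Euclidean inner product on ℝ⁷. -/
def dot (u v : Fin 7 → ℝ) : ℝ := ∑ i, u i * v i

end

def phi0Z : Fin 7 → Fin 7 → Fin 7 → ℤ := fun i j k =>
  if (i, j, k) = (0, 1, 2) then -1
  else if (i, j, k) = (0, 3, 4) then -1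
  else if (i, j, k) = (0, 5, 6) then -1
  else if (i, j, k) = (1, 3, 5) then -1
  else if (i, j, k) = (1, 4, 6) then 1
  else if (i, j, k) = (2, 3, 6) then 1
  else if (i, j, k) = (2, 4, 5) then 1
  else 0

/-- Fast form: the third index is the xor of the first two, signs are stored as bits. -/
def pZ (i j k : Fin 7) : ℤ :=
  bif Nat.beq (Nat.xor (i.val + 1) (j.val + 1)) (k.val + 1) then
    (bif Nat.testBit 112770651022890 (7 * i.val + j.val) then -1 else 1)
  else 0

theorem phi0_cast (i j k : Fin 7) : phi0 i j k = (phi0Z i j k : ℝ) := by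
  unfold phi0 phi0Z
  push_cast
  rfl

theorem pZ_eq : ∀ i j k : Fin 7, (∑ σ : Equiv.Perm (Fin 3),
    (Equiv.Perm.sign σ : ℤ) *
      phi0Z (![i, j, k] (σ 0)) (![i, j, k] (σ 1)) (![i, j, k] (σ 2))) = pZ i j k := by
  decide +kernel

theorem phi_cast (i j k : Fin 7) : phi i j k = (pZ i j k : ℝ) := by
  rw [← pZ_eq]
  unfold phi
  push_cast
  simp only [phi0_cast]

/-- Support test for `pZ`. -/
def supp (i j k : Fin 7) : Bool :=
  Nat.beq (Nat.xor (i.val + 1) (j.val + 1)) (k.val + 1)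

theorem contractZ_sparse : ∀ i j k : Fin 7, (∑ a, ∑ b, bif supp k a b then ∑ m,
    (pZ i a m * pZ j m b - pZ j a m * pZ i m b) * pZ k a b else 0) = 6 * pZ i j k := by
  decide +kernel

theorem contractZ (i j k : Fin 7) : (∑ a, ∑ b, ∑ m,
    (pZ i a m * pZ j m b - pZ j a m * pZ i m b) * pZ k a b) = 6 * pZ i j k := by
  rw [← contractZ_sparse]
  refine Finset.sum_congr rfl fun a _ => Finset.sum_congr rfl fun b _ => ?_
  cases h : supp k a b with
  | true => rfl
  | false =>
    have h0 : pZ k a b = 0 := by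
      unfold supp at h
      unfold pZ
      rw [h]
      rfl
    simp [h0]

theorem contract (i j k : Fin 7) : (∑ a, ∑ b, ∑ m,
    (phi i a m * phi j m b - phi j a m * phi i m b) * phi k a b) = 6 * phi i j k := by
  simp only [phi_cast]
  exact_mod_cast contractZ i j k

/-- Equation `pi7commutatorcrosseq`: the Ω²₇-part of the commutator [u_φ, X_φ],
regarded as a vector, is the cross product u × X. -/
theorem pi7_commutator_cross (u X : Fin 7 → ℝ) (k : Fin 7) :
    (1/6) * ∑ a, ∑ b,
      ((∑ m, (∑ l, u l * phi l a m) * (∑ l, X l * phi l m b))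
        - ∑ m, (∑ l, X l * phi l a m) * (∑ l, u l * phi l m b)) * phi k a b
      = cross u X k := by
  have key : ∑ a, ∑ b,
      ((∑ m, (∑ l, u l * phi l a m) * (∑ l, X l * phi l m b))
        - ∑ m, (∑ l, X l * phi l a m) * (∑ l, u l * phi l m b)) * phi k a b
      = ∑ i, ∑ j, u i * X j * ∑ a, ∑ b, ∑ m,
        (phi i a m * phi j m b - phi j a m * phi i m b) * phi k a b := by
    have h : ∀ a b, ((∑ m, (∑ l, u l * phi l a m) * (∑ l, X l * phi l m b))
        - ∑ m, (∑ l, X l * phi l a m) * (∑ l, u l * phi l m b)) * phi k a b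
        = ∑ i, ∑ j, ∑ m, u i * X j *
          ((phi i a m * phi j m b - phi j a m * phi i m b) * phi k a b) := by
      intro a b
      rw [← Finset.sum_sub_distrib, Finset.sum_mul]
      have h1 : ∀ m, ((∑ l, u l * phi l a m) * (∑ l, X l * phi l m b)
          - (∑ l, X l * phi l a m) * (∑ l, u l * phi l m b)) * phi k a b
          = ∑ i, ∑ j, u i * X j *
          ((phi i a m * phi j m b - phi j a m * phi i m b) * phi k a b) := by
        intro m
        rw [mul_comm (∑ l, X l * phi l a m), Finset.sum_mul_sum, Finset.sum_mul_sum,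
          ← Finset.sum_sub_distrib, Finset.sum_mul]
        refine Finset.sum_congr rfl fun i _ => ?_
        rw [← Finset.sum_sub_distrib, Finset.sum_mul]
        refine Finset.sum_congr rfl fun j _ => ?_
        ring
      simp only [h1]
      rw [Finset.sum_comm]
      refine Finset.sum_congr rfl fun i _ => ?_
      rw [Finset.sum_comm]
    simp only [h]
    simp only [Finset.mul_sum]
    rw [Finset.sum_congr rfl fun a _ => Finset.sum_comm, Finset.sum_comm]
    refine Finset.sum_congr rfl fun i _ => ?_
    rw [Finset.sum_congr rfl fun a _ => Finset.sum_comm, Finset.sum_comm]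
  rw [key]
  simp only [contract, cross, Finset.mul_sum]
  refine Finset.sum_congr rfl fun i _ => Finset.sum_congr rfl fun j _ => ?_
  ring
end

section
/- The map i from symmetric matrices to 3-forms is injective: if h is a symmetric real 7×7 matrix such that Σ_l (h_{il} φ_{ljk} + h_{jl} φ_{ilk} + h_{kl} φ_{ijl}) = 0 for all i,j,k, then h = 0. -/
open Finset

theorem phi_expand (i j k : Fin 7) : phi i j k =
    phi0 i j k - phi0 j i k - phi0 k j i - phi0 i k j + phi0 j k i + phi0 k i j := by
  have hu : (Finset.univ : Finset (Equiv.Perm (Fin 3))) =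
      {1, Equiv.swap 0 1, Equiv.swap 0 2, Equiv.swap 1 2,
        Equiv.swap 0 1 * Equiv.swap 1 2, Equiv.swap 1 2 * Equiv.swap 0 1} := by decide
  unfold phi
  rw [hu, Finset.sum_insert (by decide), Finset.sum_insert (by decide),
    Finset.sum_insert (by decide), Finset.sum_insert (by decide),
    Finset.sum_insert (by decide), Finset.sum_singleton]
  have e1 : (Equiv.swap 0 1 : Equiv.Perm (Fin 3)) 2 = 2 := by decide
  have e2 : (Equiv.swap 0 2 : Equiv.Perm (Fin 3)) 1 = 1 := by decide
  have e3 : (Equiv.swap 1 2 : Equiv.Perm (Fin 3)) 0 = 0 := by decide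
  simp [Equiv.Perm.sign_swap, e1, e2, e3]
  ring

/-- Corollary `imapinjectivecor`: the map i from symmetric matrices to 3-forms is
injective. -/
theorem i_map_injective (h : Fin 7 → Fin 7 → ℝ)
    (hsymm : ∀ i j, h j i = h i j)
    (hker : ∀ i j k : Fin 7,
      (∑ l, (h i l * phi l j k + h j l * phi i l k + h k l * phi i j l)) = 0) :
    ∀ i j, h i j = 0 := by
  have a0 := hker 0 1 2
  have a1 := hker 0 1 3
  have a2 := hker 0 1 4
  have a3 := hker 0 1 5
  have a4 := hker 0 1 6
  have a5 := hker 0 2 3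
  have a6 := hker 0 2 4
  have a7 := hker 0 2 5
  have a8 := hker 0 2 6
  have a9 := hker 0 3 4
  have a10 := hker 0 3 5
  have a11 := hker 0 3 6
  have a12 := hker 0 4 5
  have a13 := hker 0 4 6
  have a14 := hker 0 5 6
  have a15 := hker 1 2 3
  have a16 := hker 1 2 4
  have a17 := hker 1 2 5
  have a18 := hker 1 2 6
  have a19 := hker 1 3 4
  have a20 := hker 1 3 5
  have a21 := hker 1 3 6
  have a22 := hker 1 4 5
  have a23 := hker 1 4 6
  have a24 := hker 1 5 6
  have a25 := hker 2 3 4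
  have a26 := hker 2 3 5
  have a27 := hker 2 3 6
  have a28 := hker 2 4 5
  have a29 := hker 2 4 6
  have a30 := hker 2 5 6
  have a31 := hker 3 4 5
  have a32 := hker 3 4 6
  have a33 := hker 3 5 6
  have a34 := hker 4 5 6
  simp [Fin.sum_univ_seven, phi_expand, phi0, hsymm 0 1, hsymm 0 2, hsymm 0 3, hsymm 0 4, hsymm 0 5, hsymm 0 6, hsymm 1 2, hsymm 1 3, hsymm 1 4, hsymm 1 5, hsymm 1 6, hsymm 2 3, hsymm 2 4, hsymm 2 5, hsymm 2 6, hsymm 3 4, hsymm 3 5, hsymm 3 6, hsymm 4 5, hsymm 4 6, hsymm 5 6] at a0 a1 a2 a3 a4 a5 a6 a7 a8 a9 a10 a11 a12 a13 a14 a15 a16 a17 a18 a19 a20 a21 a22 a23 a24 a25 a26 a27 a28 a29 a30 a31 a32 a33 a34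
  have up : ∀ i j : Fin 7, i ≤ j → h i j = 0 := by
    intro i j hij
    fin_cases i <;> fin_cases j <;> first | (exact absurd hij (by decide)) | (simp only [Fin.zero_eta, Fin.mk_one, Fin.reduceFinMk]; linarith)
  intro i j
  rcases le_total i j with hij | hij
  · exact up i j hij
  · rw [hsymm j i]; exact up j i hij
end

section
/- For all vectors a, b, c, d ∈ ℝ⁷: (1/12) Σ_{σ∈S₇} sgn(σ) a_{σ(1)} b_{σ(2)} (Σ_m c_m φ_{m σ(3) σ(4)}) (Σ_n d_n ψ_{n σ(5) σ(6) σ(7)}) = 2 (⟨a,c⟩⟨b,d⟩ − ⟨a,d⟩⟨b,c⟩) + Σ_{i,j,k,l} ψ_{ijkl} a_i b_j c_k d_l. (This is the coordinate form of the identity a♭ ∧ b♭ ∧ (c⌐φ) ∧ (d⌐ψ) = (2 g(a∧b, c∧d) + ψ(a,b,c,d)) vol for the standard G₂-structure.) -/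
open Finset

/-- Signs encoded as natural numbers: 0, 1, 2 stand for 0, 1, -1. -/
def tz (k : ℕ) (y : ℤ) : ℤ := bif Nat.beq k 0 then 0 else bif Nat.beq k 1 then y else -y

def tv (k : ℕ) : ℤ := tz k 1

theorem tz_eq (k : ℕ) (y : ℤ) : tz k y = tv k * y := by
  unfold tv tz
  cases Nat.beq k 0 <;> cases Nat.beq k 1 <;> simp

theorem nbeq (x y : ℕ) : Nat.beq x y = decide (x = y) := by
  rw [Bool.eq_iff_iff, Nat.beq_eq, decide_eq_true_iff]
theorem nble (x y : ℕ) : Nat.ble x y = decide (x ≤ y) := by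
  rw [Bool.eq_iff_iff, Nat.ble_eq, decide_eq_true_iff]
theorem tz0 (y : ℤ) : tz 0 y = 0 := rfl
theorem tz1 (y : ℤ) : tz 1 y = y := rfl
theorem tz2 (y : ℤ) : tz 2 y = -y := rfl
theorem tv0 : tv 0 = 0 := rfl
theorem tv1 : tv 1 = 1 := rfl
theorem tv2 : tv 2 = -1 := rfl

def sgc (x y : ℕ) : ℕ := bif Nat.beq x y then 0 else bif Nat.ble x y then 1 else 2

theorem tv_sgc_self (x : ℕ) : tv (sgc x x) = 0 := by
  simp [tv, sgc, tz]

theorem tv_sgc_ne (x y : ℕ) (h : x ≠ y) : tv (sgc x y) = if x < y then 1 else -1 := by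
  have h1 : Nat.beq x y = false := by
    rw [Bool.eq_false_iff, Ne, Nat.beq_eq]; exact h
  unfold tv sgc
  rw [h1]
  by_cases hl : x < y
  · have : Nat.ble x y = true := Nat.ble_eq ▸ hl.le
    simp only [this, hl, if_true]; rfl
  · have : Nat.ble x y = false := by
      rw [Bool.eq_false_iff, Ne, Nat.ble_eq]; omega
    simp only [this, hl, if_false]; rfl

def epsf {n : ℕ} (f : Fin n → Fin n) : ℤ :=
  ∏ i, ∏ j ∈ Ioi i, tv (sgc (f i).val (f j).val)

theorem epsf_perm {n : ℕ} (σ : Equiv.Perm (Fin n)) :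
    epsf (fun i => σ i) = (Equiv.Perm.sign σ : ℤ) := by
  rw [Equiv.Perm.sign_eq_prod_prod_Ioi]
  unfold epsf
  push_cast
  refine Finset.prod_congr rfl fun i _ => Finset.prod_congr rfl fun j hj => ?_
  have hij : i < j := Finset.mem_Ioi.1 hj
  rw [tv_sgc_ne _ _ (fun h => hij.ne (σ.injective (Fin.ext h)))]
  by_cases h : σ i < σ j
  · have h' : (σ i).val < (σ j).val := h
    simp [h]
  · have h' : ¬ (σ i).val < (σ j).val := h
    simp [h]

theorem epsf_not {n : ℕ} (f : Fin n → Fin n) (h : ¬ Function.Injective f) : epsf f = 0 := by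
  have key : ∃ i j, i < j ∧ f i = f j := by
    simp only [Function.Injective, not_forall] at h
    obtain ⟨i, j, e, ne⟩ := h
    rcases lt_or_gt_of_ne ne with h | h
    · exact ⟨i, j, h, e⟩
    · exact ⟨j, i, h, e.symm⟩
  obtain ⟨i, j, h, e⟩ := key
  unfold epsf
  refine Finset.prod_eq_zero (Finset.mem_univ i) (Finset.prod_eq_zero (Finset.mem_Ioi.2 h) ?_)
  rw [e, tv_sgc_self]

theorem lc {n : ℕ} (G : (Fin n → Fin n) → ℝ) :
    ∑ σ : Equiv.Perm (Fin n), ((Equiv.Perm.sign σ : ℤ) : ℝ) * G (fun i => σ i)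
      = ∑ f : Fin n → Fin n, (epsf f : ℝ) * G f := by
  refine Finset.sum_of_injOn (fun σ i => σ i) ?_ ?_ ?_ ?_
  · intro σ _ τ _ h
    exact Equiv.ext fun i => congrFun h i
  · intro σ _
    simp
  · intro f _ hf
    rw [epsf_not f, Int.cast_zero, zero_mul]
    intro hi
    exact hf ⟨Equiv.ofBijective f (Finite.injective_iff_bijective.1 hi), by simp, rfl⟩
  · intro σ _
    rw [epsf_perm]

theorem fsum_cons {n : ℕ} {α : Type} [Fintype α] (G : (Fin (n + 1) → α) → ℝ) :
    ∑ f, G f = ∑ x, ∑ g : Fin n → α, G (Fin.cons x g) := by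
  classical
  rw [← Fintype.sum_prod_type', ← (Fin.consEquiv (fun _ : Fin (n + 1) => α)).sum_comp]
  rfl

theorem fsum_zero {α : Type} [Fintype α] (G : (Fin 0 → α) → ℝ) :
    ∑ f, G f = G ![] := by
  classical
  rw [Fintype.sum_unique]
  congr 1

theorem ioi_prod {n : ℕ} (i : Fin n) (h : Fin n → ℤ) :
    ∏ j ∈ Ioi i, h j = ∏ j, if i < j then h j else 1 := by
  rw [← Finset.prod_filter]
  congr 1
  ext; simp

def s7 (f : ℕ → ℤ) : ℤ := f 0 + f 1 + f 2 + f 3 + f 4 + f 5 + f 6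
def s4 (f : ℕ → ℤ) : ℤ := f 0 + f 1 + f 2 + f 3
def s3 (f : ℕ → ℤ) : ℤ := f 0 + f 1 + f 2

theorem s7_eq (f : ℕ → ℤ) : s7 f = ∑ i : Fin 7, f i.val := by
  simp [s7, Fin.sum_univ_succ]; ring
theorem s4_eq (f : ℕ → ℤ) : s4 f = ∑ i : Fin 4, f i.val := by
  simp [s4, Fin.sum_univ_succ]; ring
theorem s3_eq (f : ℕ → ℤ) : s3 f = ∑ i : Fin 3, f i.val := by
  simp [s3, Fin.sum_univ_succ]; ring

def all7 (f : ℕ → Bool) : Bool := f 0 && (f 1 && (f 2 && (f 3 && (f 4 && (f 5 && f 6)))))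

theorem all7_spec (f : ℕ → Bool) (h : all7 f = true) (i : Fin 7) : f i.val = true := by
  simp only [all7, Bool.and_eq_true] at h
  obtain ⟨h0, h1, h2, h3, h4, h5, h6⟩ := h
  fin_cases i <;> assumption

/-- Equality test for integers. -/
def ieq (x y : ℤ) : Bool := decide (x = y)

def lk (t c : ℕ) : ℕ := Nat.mod (Nat.shiftRight t (Nat.mul 2 c)) 4
def c3 (i j k : ℕ) : ℕ := Nat.add (Nat.mul 7 (Nat.add (Nat.mul 7 i) j)) k
def c4 (i j k l : ℕ) : ℕ := Nat.add (Nat.mul 7 (c3 i j k)) l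

def f0c (c : ℕ) : ℕ :=
  bif Nat.beq c 9 then 2 else
  bif Nat.beq c 25 then 2 else
  bif Nat.beq c 41 then 2 else
  bif Nat.beq c 75 then 2 else
  bif Nat.beq c 83 then 1 else
  bif Nat.beq c 125 then 1 else
  bif Nat.beq c 131 then 1 else
  0
def f0N (i j k : ℕ) : ℕ := f0c (c3 i j k)
def fN (i j k : ℕ) : ℕ := lk 0x400800800400400800000800000800040400080400000400400000004800800008000400080008000800040004000800800400400000000040080800040400080000080000040400800004008000040080000 (c3 i j k)
def p0c (c : ℕ) : ℕ :=
  bif Nat.beq c 76 then 1 else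
  bif Nat.beq c 82 then 1 else
  bif Nat.beq c 124 then 1 else
  bif Nat.beq c 132 then 2 else
  bif Nat.beq c 466 then 2 else
  bif Nat.beq c 482 then 2 else
  bif Nat.beq c 1266 then 2 else
  0
def p0N (i j k l : ℕ) : ℕ := p0c (c4 i j k l)
def pN (i j k l : ℕ) : ℕ := lk 0x2001000020010000000001000002000002000001000002001000000000000100200000010001000000020002000000020000000210000000100000000002000101000200000000000001002000010020000000000000000000000000000002000000001000000000100201000002000000000100000200020000000000200010000100010000000200020000000100000000000100100200200000000002000001000001000002001000000002000000000200100000000000000000000000002001000000000000200100000002000000000100000201000000000100000200100000200001000200000002000100000000001002000000000000200102000001000000000200000101002000000000000100200000000000000000000000000000000000100200000000100200000100000100000200000200000200200000000100100000000000020002000000010001000010000000000100020000200001000000000200000102000000000200100000000200100000000000000000000000000020010000200100000000000002000101000200000000000000000010000000120000000200020000000100010000000200000000200000100200000100000200000200000100000100010020000100200000000000000000000000000000000000000100100200200000000000000000000001000202000100000000000000200200100100000002000100000001000200000000100100000000200200000001000202000100000000000000200200100100000000000000000000000000000000000000 (c4 i j k l)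

theorem c3_inj (i j k a b c : Fin 7) : (i, j, k) = (a, b, c) ↔ c3 i j k = c3 a b c := by
  simp only [Prod.mk.injEq, Fin.ext_iff, c3, Nat.mul_eq, Nat.add_eq]
  omega

theorem c4_inj (i j k l a b c d : Fin 7) :
    (i, j, k, l) = (a, b, c, d) ↔ c4 i j k l = c4 a b c d := by
  simp only [Prod.mk.injEq, Fin.ext_iff, c4, c3, Nat.mul_eq, Nat.add_eq]
  omega

theorem bcond (c e x y : ℕ) : tv (bif Nat.beq c e then x else y) = if c = e then tv x else tv y := by
  by_cases h : c = e
  · simp [h]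
  · have h1 : Nat.beq c e = false := by
      rw [Bool.eq_false_iff, Ne, Nat.beq_eq]; exact h
    simp only [h1, if_neg h, cond_false]

theorem phi0_eq (i j k : Fin 7) : phi0 i j k = (tv (f0N i j k) : ℝ) := by
  unfold phi0 f0N f0c
  simp only [c3_inj, bcond, Int.cast_ite]
  norm_num [tv0, tv1, tv2, c3]

theorem psi0_eq (i j k l : Fin 7) : psi0 i j k l = (tv (p0N i j k l) : ℝ) := by
  unfold psi0 p0N p0c
  simp only [c4_inj, bcond, Int.cast_ite]
  norm_num [tv0, tv1, tv2, c4, c3]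

def n3 (i j k x : ℕ) : ℕ := bif Nat.beq x 0 then i else bif Nat.beq x 1 then j else k
def n4 (i j k l x : ℕ) : ℕ :=
  bif Nat.beq x 0 then i else bif Nat.beq x 1 then j else bif Nat.beq x 2 then k else l

theorem n3_eq (i j k : Fin 7) (x : Fin 3) : (![i, j, k] x).val = n3 i j k x := by
  fin_cases x <;> rfl
theorem n4_eq (i j k l : Fin 7) (x : Fin 4) : (![i, j, k, l] x).val = n4 i j k l x := by
  fin_cases x <;> rfl

def phiC (i j k : ℕ) : ℤ := s3 fun x => s3 fun y => tz (sgc x y) (s3 fun z =>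
  tz (sgc x z) (tz (sgc y z) (tv (f0N (n3 i j k x) (n3 i j k y) (n3 i j k z)))))

def psiC (i j k l : ℕ) : ℤ := s4 fun x => s4 fun y => tz (sgc x y) (s4 fun z =>
  tz (sgc x z) (tz (sgc y z) (s4 fun w => tz (sgc x w) (tz (sgc y w) (tz (sgc z w)
    (tv (p0N (n4 i j k l x) (n4 i j k l y) (n4 i j k l z) (n4 i j k l w))))))))

def phiE (i j k : ℕ) : ℤ :=
    tv (f0N i j k) - tv (f0N i k j) - tv (f0N j i k) + tv (f0N j k i) + tv (f0N k i j)
    - tv (f0N k j i)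

def psiE (i j k l : ℕ) : ℤ :=
    tv (p0N i j k l) - tv (p0N i j l k) - tv (p0N i k j l) + tv (p0N i k l j)
    + tv (p0N i l j k) - tv (p0N i l k j) - tv (p0N j i k l) + tv (p0N j i l k)
    + tv (p0N j k i l) - tv (p0N j k l i) - tv (p0N j l i k) + tv (p0N j l k i)
    + tv (p0N k i j l) - tv (p0N k i l j) - tv (p0N k j i l) + tv (p0N k j l i)
    + tv (p0N k l i j) - tv (p0N k l j i) - tv (p0N l i j k) + tv (p0N l i k j)
    + tv (p0N l j i k) - tv (p0N l j k i) - tv (p0N l k i j) + tv (p0N l k j i)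

theorem phiC_eq (i j k : ℕ) : phiC i j k = phiE i j k := by
  simp [phiC, phiE, s3, tz0, tz1, tz2, sgc, n3, nbeq, nble]; ring

theorem psiC_eq (i j k l : ℕ) : psiC i j k l = psiE i j k l := by
  simp [psiC, psiE, s4, tz0, tz1, tz2, sgc, n4, nbeq, nble]; ring

theorem phiC_chk : (all7 fun i => all7 fun j => all7 fun k =>
    ieq (phiE i j k) (tv (fN i j k))) = true := by decide +kernel

theorem psiC_chk : (all7 fun i => all7 fun j => all7 fun k => all7 fun l =>
    ieq (psiE i j k l) (tv (pN i j k l))) = true := by decide +kernel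

def del (x y : ℕ) (z : ℤ) : ℤ := bif Nat.beq x y then z else 0

def pairs (n : ℕ) (f : ℕ → ℕ → ℤ) : ℤ :=
  bif Nat.beq n 0 then -f 1 2 - f 3 4 - f 5 6 else
  bif Nat.beq n 1 then f 0 2 - f 3 5 + f 4 6 else
  bif Nat.beq n 2 then -f 0 1 + f 3 6 + f 4 5 else
  bif Nat.beq n 3 then f 0 4 + f 1 5 - f 2 6 else
  bif Nat.beq n 4 then -f 0 3 - f 1 6 - f 2 5 else
  bif Nat.beq n 5 then f 0 6 - f 1 3 + f 2 4 else
  bif Nat.beq n 6 then -f 0 5 + f 1 4 + f 2 3 else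
  0

def tri (n : ℕ) (f : ℕ → ℕ → ℕ → ℤ) : ℤ :=
  bif Nat.beq n 0 then f 1 3 6 + f 1 4 5 + f 2 3 5 - f 2 4 6 else
  bif Nat.beq n 1 then -f 0 3 6 - f 0 4 5 - f 2 3 4 - f 2 5 6 else
  bif Nat.beq n 2 then -f 0 3 5 + f 0 4 6 + f 1 3 4 + f 1 5 6 else
  bif Nat.beq n 3 then f 0 1 6 + f 0 2 5 - f 1 2 4 - f 4 5 6 else
  bif Nat.beq n 4 then f 0 1 5 - f 0 2 6 + f 1 2 3 + f 3 5 6 else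
  bif Nat.beq n 5 then -f 0 1 4 - f 0 2 3 - f 1 2 6 - f 3 4 6 else
  bif Nat.beq n 6 then -f 0 1 3 + f 0 2 4 + f 1 2 5 + f 3 4 5 else
  0

def lkN (t c : ℕ) : ℕ := (t >>> (2 * c)) % 4

theorem lk_eq (t c : ℕ) : lk t c = lkN t c := rfl

theorem pairs_eq (n : Fin 7) (f : ℕ → ℕ → ℤ) :
    pairs n f = s7 fun p => s7 fun q => if p < q then tv (fN n p q) * f p q else 0 := by
  fin_cases n <;> simp [s7, pairs, tv0, tv1, tv2, nbeq, fN, lk_eq, lkN, c3] <;> ring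

theorem tri_eq (n : Fin 7) (f : ℕ → ℕ → ℕ → ℤ) :
    tri n f = s7 fun r => s7 fun s => s7 fun t =>
      if r < s ∧ s < t then tv (pN n r s t) * f r s t else 0 := by
  fin_cases n <;> simp [s7, tri, tv0, tv1, tv2, nbeq, pN, lk_eq, lkN, c4, c3] <;> ring

theorem sum2 (g : Fin 7 → Fin 7 → ℤ) (h : ∀ p q, g p q = g q p) (h0 : ∀ p, g p p = 0) :
    ∑ p, ∑ q, g p q = 2 * ∑ p, ∑ q, if p.val < q.val then g p q else 0 := by
  have e : ∀ p q : Fin 7, g p q = (if p.val < q.val then g p q else 0) +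
      (if q.val < p.val then g q p else 0) := by
    intro p q
    rcases lt_trichotomy p q with hh | hh | hh
    · have h1 : p.val < q.val := hh
      rw [if_pos h1, if_neg (by omega), add_zero]
    · subst hh; simp [h0]
    · have h1 : q.val < p.val := hh
      rw [if_pos h1, if_neg (by omega), zero_add, h p q]
  rw [Finset.sum_congr rfl fun p _ => Finset.sum_congr rfl fun q _ => e p q]
  simp only [Finset.sum_add_distrib]
  rw [Finset.sum_comm (f := fun p q : Fin 7 => if q.val < p.val then g q p else 0)]
  ring

theorem sum3 (g : Fin 7 → Fin 7 → Fin 7 → ℤ) (h1 : ∀ r s t, g r s t = g s r t)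
    (h2 : ∀ r s t, g r s t = g r t s) (h0 : ∀ r t, g r r t = 0) :
    ∑ r, ∑ s, ∑ t, g r s t =
      6 * ∑ r, ∑ s, ∑ t, if r.val < s.val ∧ s.val < t.val then g r s t else 0 := by
  obtain ⟨u, hu⟩ : ∃ u : Fin 7 → Fin 7 → Fin 7 → ℤ, ∀ r s t,
    u r s t = if r.val < s.val ∧ s.val < t.val then g r s t else 0 := ⟨_, fun _ _ _ => rfl⟩
  have e : ∀ r s t : Fin 7, g r s t = u r s t + u r t s + u s r t + u s t r + u t r s + u t s r := by
    intro r s t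
    have a1 := h1 r s t
    have a2 := h2 r s t
    have a3 := h2 s r t
    have a4 := h1 r t s
    have a5 := h2 t r s
    have a6 := h1 s t r
    have z1 : r.val = s.val → g r s t = 0 := fun h => by rw [Fin.ext h]; exact h0 _ _
    have z2 : r.val = t.val → g r s t = 0 := fun h => by rw [h2, Fin.ext h]; exact h0 _ _
    have z3 : s.val = t.val → g r s t = 0 := fun h => by rw [h1, h2, Fin.ext h]; exact h0 _ _
    simp only [hu]
    split_ifs <;> omega
  have sc : ∀ w : Fin 7 → Fin 7 → ℤ, ∑ x, ∑ y, w x y = ∑ x, ∑ y, w y x :=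
    fun w => Finset.sum_comm
  have s23 : ∀ w : Fin 7 → Fin 7 → Fin 7 → ℤ, ∑ x, ∑ y, ∑ z, w x y z = ∑ x, ∑ y, ∑ z, w x z y :=
    fun w => Finset.sum_congr rfl fun x _ => sc (w x)
  have s12 : ∀ w : Fin 7 → Fin 7 → Fin 7 → ℤ, ∑ x, ∑ y, ∑ z, w x y z = ∑ x, ∑ y, ∑ z, w y x z :=
    fun w => sc fun x y => ∑ z, w x y z
  simp only [← hu]
  rw [Finset.sum_congr rfl fun r _ => Finset.sum_congr rfl fun s _ =>
    Finset.sum_congr rfl fun t _ => e r s t]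
  simp only [Finset.sum_add_distrib]
  have b1 := s23 u
  have b2 := s12 u
  have b3 := s12 fun x y z => u x z y
  have b4 := s23 fun x y z => u y x z
  have b5 := s23 fun x y z => u y z x
  have b6 := s12 fun x y z => u z x y
  linarith

def coefC (i j m n : ℕ) : ℤ := tz (sgc i j) (
  pairs m fun p q => tz (sgc i p) (tz (sgc j p) (tz (sgc i q) (tz (sgc j q) (tz (sgc p q) (
  tri n fun r s t => tz (sgc i r) (tz (sgc j r) (tz (sgc p r) (tz (sgc q r) (
   tz (sgc i s) (tz (sgc j s) (tz (sgc p s) (tz (sgc q s) (tz (sgc r s) (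
   tz (sgc i t) (tz (sgc j t) (tz (sgc p t) (tz (sgc q t)
      (tz (sgc r t) (tv (sgc s t)))))))))))))))))))))

def rhsC (i j m n : ℕ) : ℤ :=
  2 * (del i m (del j n 1) - del i n (del j m 1)) + tv (pN i j m n)

theorem fN_chk : (all7 fun i => all7 fun j => all7 fun k =>
    ieq (tv (fN i j k)) (-tv (fN i k j))) = true := by decide +kernel

theorem pN_chk : (all7 fun i => all7 fun j => all7 fun k => all7 fun l =>
    (ieq (tv (pN i j k l)) (-tv (pN i k j l)) &&
     ieq (tv (pN i j k l)) (-tv (pN i j l k)))) = true := by decide +kernel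

theorem fN_anti (i j k : Fin 7) : tv (fN i j k) = -tv (fN i k j) := by
  simpa [ieq] using all7_spec _ (all7_spec _ (all7_spec _ fN_chk i) j) k

theorem pN_anti (i j k l : Fin 7) :
    tv (pN i j k l) = -tv (pN i k j l) ∧ tv (pN i j k l) = -tv (pN i j l k) := by
  simpa [ieq] using all7_spec _ (all7_spec _ (all7_spec _ (all7_spec _ pN_chk i) j) k) l

theorem sgc_anti (x y : ℕ) : tv (sgc x y) = -tv (sgc y x) := by
  by_cases h : x = y
  · subst h; simp [tv_sgc_self]
  · rw [tv_sgc_ne _ _ h, tv_sgc_ne _ _ (Ne.symm h)]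
    rcases lt_or_gt_of_ne h with h | h
    · rw [if_pos h, if_neg (by omega), neg_neg]
    · rw [if_neg (by omega), if_pos h]

theorem coef_chk : (all7 fun i => all7 fun j => all7 fun m => all7 fun n =>
    ieq (coefC i j m n) (rhsC i j m n)) = true := by decide +kernel

theorem phi_eq (i j k : Fin 7) : phi i j k = (tv (fN i j k) : ℝ) := by
  have h : phiC i j k = tv (fN i j k) := by
    rw [phiC_eq]
    simpa [ieq] using all7_spec _ (all7_spec _ (all7_spec _ phiC_chk i) j) k
  rw [← h]
  unfold phi
  refine (lc (fun f => phi0 (![i, j, k] (f 0)) (![i, j, k] (f 1)) (![i, j, k] (f 2)))).trans ?_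
  simp only [fsum_cons, fsum_zero, phiC, s3_eq, tz_eq, phi0_eq, n3_eq, Int.cast_sum, Int.cast_mul,
    Finset.mul_sum]
  refine Finset.sum_congr rfl fun x _ => Finset.sum_congr rfl fun y _ =>
    Finset.sum_congr rfl fun z _ => ?_
  change (epsf ![x, y, z] : ℝ) * (tv (f0N (n3 i j k x) (n3 i j k y) (n3 i j k z)) : ℝ) = _
  simp [epsf, ioi_prod, Fin.prod_univ_succ]
  ring

theorem psi_eq (i j k l : Fin 7) : psi i j k l = (tv (pN i j k l) : ℝ) := by
  have h : psiC i j k l = tv (pN i j k l) := by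
    rw [psiC_eq]
    simpa [ieq] using all7_spec _ (all7_spec _ (all7_spec _ (all7_spec _ psiC_chk i) j) k) l
  rw [← h]
  unfold psi
  refine (lc (fun f => psi0 (![i, j, k, l] (f 0)) (![i, j, k, l] (f 1)) (![i, j, k, l] (f 2))
    (![i, j, k, l] (f 3)))).trans ?_
  simp only [fsum_cons, fsum_zero, psiC, s4_eq, tz_eq, psi0_eq, n4_eq, Int.cast_sum, Int.cast_mul,
    Finset.mul_sum]
  refine Finset.sum_congr rfl fun x _ => Finset.sum_congr rfl fun y _ =>
    Finset.sum_congr rfl fun z _ => Finset.sum_congr rfl fun w _ => ?_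
  change (epsf ![x, y, z, w] : ℝ) *
    (tv (p0N (n4 i j k l x) (n4 i j k l y) (n4 i j k l z) (n4 i j k l w)) : ℝ) = _
  simp [epsf, ioi_prod, Fin.prod_univ_succ]
  ring

def eps7 (i j p q r s t : Fin 7) : ℤ := epsf ![i, j, p, q, r, s, t]

theorem eps7_eq (i j p q r s t : Fin 7) : eps7 i j p q r s t =
    tv (sgc i j) * tv (sgc i p) * tv (sgc i q) * tv (sgc i r) * tv (sgc i s) * tv (sgc i t) *
    tv (sgc j p) * tv (sgc j q) * tv (sgc j r) * tv (sgc j s) * tv (sgc j t) *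
    tv (sgc p q) * tv (sgc p r) * tv (sgc p s) * tv (sgc p t) *
    tv (sgc q r) * tv (sgc q s) * tv (sgc q t) * tv (sgc r s) * tv (sgc r t) * tv (sgc s t) := by
  simp [eps7, epsf, ioi_prod, Fin.prod_univ_succ]
  ring

theorem eps7_pq (i j p q r s t : Fin 7) : eps7 i j p q r s t = -eps7 i j q p r s t := by
  rw [eps7_eq, eps7_eq, sgc_anti q p]; ring
theorem eps7_rs (i j p q r s t : Fin 7) : eps7 i j p q r s t = -eps7 i j p q s r t := by
  rw [eps7_eq, eps7_eq, sgc_anti s r]; ring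
theorem eps7_st (i j p q r s t : Fin 7) : eps7 i j p q r s t = -eps7 i j p q r t s := by
  rw [eps7_eq, eps7_eq, sgc_anti t s]; ring

theorem coef_eq (i j m n : Fin 7) :
    ∑ p : Fin 7, ∑ q : Fin 7, ∑ r : Fin 7, ∑ s : Fin 7, ∑ t : Fin 7,
      eps7 i j p q r s t * (tv (fN m p q) * tv (pN n r s t)) = 12 * rhsC i j m n := by
  have h : coefC i j m n = rhsC i j m n := by
    simpa [ieq] using all7_spec _ (all7_spec _ (all7_spec _ (all7_spec _ coef_chk i) j) m) n
  rw [← h]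
  have k1 : ∀ p q : Fin 7, ∑ r : Fin 7, ∑ s : Fin 7, ∑ t : Fin 7,
      eps7 i j p q r s t * (tv (fN m p q) * tv (pN n r s t)) =
      6 * ∑ r : Fin 7, ∑ s : Fin 7, ∑ t : Fin 7, if r.val < s.val ∧ s.val < t.val then
      eps7 i j p q r s t * (tv (fN m p q) * tv (pN n r s t)) else 0 := by
    intro p q
    refine sum3 (fun r s t => eps7 i j p q r s t * (tv (fN m p q) * tv (pN n r s t))) ?_ ?_ ?_
    · intro r s t
      rw [eps7_rs, (pN_anti n r s t).1]; ring
    · intro r s t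
      rw [eps7_st, (pN_anti n r s t).2]; ring
    · intro r t
      rw [eps7_eq, tv_sgc_self r]; ring
  rw [sum2 (fun p q => ∑ r : Fin 7, ∑ s : Fin 7, ∑ t : Fin 7,
      eps7 i j p q r s t * (tv (fN m p q) * tv (pN n r s t)))]
  · simp only [k1]
    simp only [coefC, pairs_eq, tri_eq, s7_eq, tz_eq, eps7_eq]
    have t2 : ∀ (P : Prop) [Decidable P] (x y : ℤ), x * (if P then y else 0) =
      if P then x * y else 0 := fun P _ x y => mul_ite_zero _ _ _
    have t3 : ∀ (P : Prop) [Decidable P] (w : Fin 7 → ℤ), (if P then ∑ x, w x else 0) =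
      ∑ x, if P then w x else 0 := fun P _ w => by split_ifs <;> simp
    simp only [Finset.mul_sum, t2, t3]
    refine Finset.sum_congr rfl fun p _ => Finset.sum_congr rfl fun q _ =>
      Finset.sum_congr rfl fun r _ => Finset.sum_congr rfl fun s _ =>
      Finset.sum_congr rfl fun t _ => ?_
    split_ifs <;> ring
  · intro p q
    refine Finset.sum_congr rfl fun r _ => Finset.sum_congr rfl fun s _ =>
      Finset.sum_congr rfl fun t _ => ?_
    rw [eps7_pq, fN_anti]; ring
  · intro p
    refine Finset.sum_eq_zero fun r _ => Finset.sum_eq_zero fun s _ =>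
      Finset.sum_eq_zero fun t _ => ?_
    rw [eps7_eq, tv_sgc_self p]; ring

theorem coef_real (i j m n : Fin 7) :
    ∑ p : Fin 7, ∑ q : Fin 7, ∑ r : Fin 7, ∑ s : Fin 7, ∑ t : Fin 7,
      (eps7 i j p q r s t : ℝ) * (phi m p q * psi n r s t) =
      24 * ((if i = m then 1 else 0) * (if j = n then 1 else 0)
        - (if i = n then 1 else 0) * (if j = m then 1 else 0)) + 12 * psi i j m n := by
  have h := congrArg (Int.cast : ℤ → ℝ) (coef_eq i j m n)
  push_cast at h
  simp only [phi_eq, psi_eq]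
  rw [h]
  have hb : ∀ x y : Fin 7, Nat.beq x.val y.val = decide (x = y) := by decide
  have hd : ∀ (x y : Fin 7) (z : ℤ), (del x y z : ℝ) = (if x = y then 1 else 0) * (z : ℝ) := by
    intro x y z
    simp only [del, hb]
    by_cases h : x = y <;> simp [h]
  simp only [rhsC]
  push_cast
  simp only [hd]
  push_cast
  ring

theorem swap5 (H : Fin 7 → Fin 7 → Fin 7 → Fin 7 → Fin 7 → Fin 7 → ℝ) :
    ∑ p, ∑ q, ∑ r, ∑ s, ∑ t, ∑ m, H p q r s t m = ∑ m, ∑ p, ∑ q, ∑ r, ∑ s, ∑ t, H p q r s t m := by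
  have sc : ∀ K : Fin 7 → Fin 7 → ℝ, ∑ x, ∑ m, K x m = ∑ m, ∑ x, K x m :=
    fun K => Finset.sum_comm
  rw [sc fun m p => ∑ q, ∑ r, ∑ s, ∑ t, H p q r s t m]
  refine Finset.sum_congr rfl fun p _ => ?_
  rw [sc fun m q => ∑ r, ∑ s, ∑ t, H p q r s t m]
  refine Finset.sum_congr rfl fun q _ => ?_
  rw [sc fun m r => ∑ s, ∑ t, H p q r s t m]
  refine Finset.sum_congr rfl fun r _ => ?_
  rw [sc fun m s => ∑ t, H p q r s t m]
  refine Finset.sum_congr rfl fun s _ => ?_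
  rw [sc fun m t => H p q r s t m]

theorem inn_sum (c d : Fin 7 → ℝ) (i j : Fin 7) :
    ∑ p : Fin 7, ∑ q : Fin 7, ∑ r : Fin 7, ∑ s : Fin 7, ∑ t : Fin 7,
      (eps7 i j p q r s t : ℝ) * ((∑ m, c m * phi m p q) * (∑ n, d n * psi n r s t)) =
    ∑ m, ∑ n, c m * d n * (24 * ((if i = m then 1 else 0) * (if j = n then 1 else 0)
        - (if i = n then 1 else 0) * (if j = m then 1 else 0)) + 12 * psi i j m n) := by
  simp only [← coef_real]
  simp only [Finset.sum_mul_sum]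
  simp only [Finset.mul_sum]
  rw [swap5]
  refine Finset.sum_congr rfl fun m _ => ?_
  rw [swap5]
  refine Finset.sum_congr rfl fun n _ => Finset.sum_congr rfl fun p _ =>
    Finset.sum_congr rfl fun q _ =>
    Finset.sum_congr rfl fun r _ => Finset.sum_congr rfl fun s _ =>
    Finset.sum_congr rfl fun t _ => ?_
  ring

theorem inn_sum2 (c d : Fin 7 → ℝ) (i j : Fin 7) :
    ∑ m, ∑ n, c m * d n * (24 * ((if i = m then 1 else 0) * (if j = n then 1 else 0)
        - (if i = n then 1 else 0) * (if j = m then 1 else 0)) + 12 * psi i j m n) =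
    24 * (c i * d j - c j * d i) + 12 * ∑ m, ∑ n, psi i j m n * c m * d n := by
  have e : ∀ m n : Fin 7, c m * d n * (24 * ((if i = m then 1 else 0) * (if j = n then 1 else 0)
        - (if i = n then 1 else 0) * (if j = m then 1 else 0)) + 12 * psi i j m n) =
      24 * ((if i = m then c m else 0) * (if j = n then d n else 0))
      - 24 * ((if j = m then c m else 0) * (if i = n then d n else 0))
      + 12 * (psi i j m n * c m * d n) := by
    intro m n
    split_ifs <;> ring
  simp only [e, Finset.sum_add_distrib, Finset.sum_sub_distrib, ← Finset.mul_sum,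
    ← Finset.sum_mul, Finset.sum_ite_eq, Finset.mem_univ, if_true]
  ring

/-- Proposition `vecvecphipsiprop` in coordinates:
a♭ ∧ b♭ ∧ (c⌐φ) ∧ (d⌐ψ) = (2 g(a∧b, c∧d) + ψ(a,b,c,d)) vol. -/
theorem vec_vec_phi_psi (a b c d : Fin 7 → ℝ) :
    (1/12) * ∑ σ : Equiv.Perm (Fin 7),
      ((Equiv.Perm.sign σ : ℤ) : ℝ) *
        (a (σ 0) * b (σ 1) * (∑ m, c m * phi m (σ 2) (σ 3)) *
          (∑ n, d n * psi n (σ 4) (σ 5) (σ 6)))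
      = 2 * (dot a c * dot b d - dot a d * dot b c)
        + ∑ i, ∑ j, ∑ k, ∑ l, psi i j k l * a i * b j * c k * d l := by
  have h1 := lc (n := 7) (fun f => a (f 0) * b (f 1) * (∑ m, c m * phi m (f 2) (f 3)) *
          (∑ n, d n * psi n (f 4) (f 5) (f 6)))
  have h2 : ∑ f : Fin 7 → Fin 7, (epsf f : ℝ) *
      (a (f 0) * b (f 1) * (∑ m, c m * phi m (f 2) (f 3)) *
          (∑ n, d n * psi n (f 4) (f 5) (f 6))) =
      ∑ i, ∑ j, ∑ p : Fin 7, ∑ q : Fin 7, ∑ r : Fin 7, ∑ s : Fin 7, ∑ t : Fin 7,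
      (eps7 i j p q r s t : ℝ) * (a i * b j * (∑ m, c m * phi m p q) *
        (∑ n, d n * psi n r s t)) := by
    simp only [fsum_cons, fsum_zero]
    rfl
  have h3 : ∀ i j : Fin 7, ∑ p : Fin 7, ∑ q : Fin 7, ∑ r : Fin 7, ∑ s : Fin 7, ∑ t : Fin 7,
      (eps7 i j p q r s t : ℝ) * (a i * b j * (∑ m, c m * phi m p q) *
        (∑ n, d n * psi n r s t)) =
      a i * b j * (24 * (c i * d j - c j * d i) + 12 * ∑ m, ∑ n, psi i j m n * c m * d n) := by
    intro i j
    rw [← inn_sum2, ← inn_sum]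
    have t1 : ∀ w : Fin 7 → ℝ, a i * b j * ∑ x, w x = ∑ x, a i * b j * w x :=
      fun w => Finset.mul_sum _ _ _
    rw [t1]
    conv_rhs =>
      enter [2, p]
      rw [t1]
      enter [2, q]
      rw [t1]
      enter [2, r]
      rw [t1]
      enter [2, s]
      rw [t1]
    refine Finset.sum_congr rfl fun p _ =>
      Finset.sum_congr rfl fun q _ =>
      Finset.sum_congr rfl fun r _ => Finset.sum_congr rfl fun s _ =>
      Finset.sum_congr rfl fun t _ => ?_
    ring
  refine (congrArg (fun x => (1/12 : ℝ) * x) (h1.trans h2)).trans ?_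
  simp only [h3]
  have e1 : ∀ i j, ∑ k, ∑ l, psi i j k l * a i * b j * c k * d l =
      a i * b j * ∑ k, ∑ l, psi i j k l * c k * d l := by
    intro i j
    simp only [Finset.mul_sum]
    refine Finset.sum_congr rfl fun k _ => Finset.sum_congr rfl fun l _ => ?_
    ring
  simp only [e1, dot, Finset.sum_mul_sum]
  rw [← Finset.sum_sub_distrib]
  simp only [← Finset.sum_sub_distrib, Finset.mul_sum (a := (2 : ℝ)), ← Finset.sum_add_distrib,
    Finset.mul_sum (a := (1/12 : ℝ))]
  refine Finset.sum_congr rfl fun i _ => Finset.sum_congr rfl fun j _ => ?_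
  ring
end

section
/- Let R = (R_{ijkl}) be a real array indexed by quadruples of indices in {1,…,7} satisfying R_{ijkl} = −R_{jikl}, R_{ijkl} = −R_{ijlk}, and the first Bianchi identity R_{ijkl} + R_{iklj} + R_{iljk} = 0 for all indices. Define Q_{ijkl} = Σ_{a,b} R_{ijab} ψ_{abkl}. Then the contraction of Q over its first and last indices vanishes: Σ_i Q_{ijki} = 0 for all j,k. -/
open Finset

theorem psi_cyc (a b k i : Fin 7) : psi b i k a = psi a b k i := by
  unfold psi
  refine Fintype.sum_equiv
    (Equiv.mulLeft (Equiv.swap (0 : Fin 4) 1 * Equiv.swap (1 : Fin 4) 3)) _ _ ?_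
  intro σ
  have key : ∀ x : Fin 4, ![b, i, k, a] x =
      ![a, b, k, i] ((Equiv.swap (0 : Fin 4) 1 * Equiv.swap (1 : Fin 4) 3) x) := by
    intro x
    fin_cases x <;> rfl
  have hs : Equiv.Perm.sign (Equiv.swap (0 : Fin 4) 1 * Equiv.swap (1 : Fin 4) 3) = 1 := by
    decide
  rw [Equiv.coe_mulLeft, Equiv.Perm.sign_mul, hs, one_mul]
  simp only [key, Equiv.Perm.mul_apply]

/-- Lemma `riccilemma`: for an algebraic curvature tensor R, the contraction of
`Q_{ijkl} = R_{ijab} ψ_{abkl}` over its first and last indices vanishes. -/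
theorem Q_contraction_vanishes (R : Fin 7 → Fin 7 → Fin 7 → Fin 7 → ℝ)
    (h1 : ∀ i j k l, R j i k l = -R i j k l)
    (h2 : ∀ i j k l, R i j l k = -R i j k l)
    (hbianchi : ∀ i j k l, R i j k l + R i k l j + R i l j k = 0) :
    ∀ j k : Fin 7, (∑ i, ∑ a, ∑ b, R i j a b * psi a b k i) = 0 := by
  intro j k
  have rot : ∀ f : Fin 7 → Fin 7 → Fin 7 → ℝ,
      (∑ i, ∑ a, ∑ b, f i a b) = ∑ i, ∑ a, ∑ b, f a b i := by
    intro f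
    symm
    rw [Finset.sum_comm]
    exact Finset.sum_congr rfl fun x _ => Finset.sum_comm
  have e1 := rot (fun i a b => R i j a b * psi a b k i)
  have e2 := rot (fun i a b => R a j b i * psi b i k a)
  have e3 : (∑ i, ∑ a, ∑ b, R i j a b * psi a b k i)
      + (∑ i, ∑ a, ∑ b, R a j b i * psi b i k a)
      + (∑ i, ∑ a, ∑ b, R b j i a * psi i a k b) = 0 := by
    simp only [← Finset.sum_add_distrib]
    refine Finset.sum_eq_zero fun i _ => Finset.sum_eq_zero fun a _ =>
      Finset.sum_eq_zero fun b _ => ?_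
    rw [← psi_cyc i a k b, psi_cyc a b k i, h1 j i, h1 j a, h1 j b]
    linear_combination (-psi a b k i) * hbianchi j i a b
  linarith
end
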